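/- Elliptic regularity estimates on the slab: (1) For i = 0, 1 and any vector field u ∈ H^{i+2}(Ω) satisfying the Navier boundary conditions u₃ = ∂₃u₁ = ∂₃u₂ = 0 on ∂Ω, it holds that ‖∇ⁱu‖₂ ≲ ‖∇ⁱu‖₀ + ‖Δ∇ⁱu‖₀. (2) For any scalar σ ∈ H³(Ω) with σ|_{∂Ω} = ∂₃²σ|_{∂Ω} = 0, it holds that ‖σ‖₃ ≲ ‖∇Δσ‖₀ and ‖∂_sσ‖₂ ≲ ‖∂_sΔσ‖₀ for s ∈ {1, 2, t} (when the corresponding derivative exists). -/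

import Mathlib

open MeasureTheory Set Filter Topology
open scoped ENNReal

noncomputable section

abbrev R3 : Type := Fin 3 → ℝ

/-- The slab Ω = ℝ² × (0, h). -/
def slab (hh : ℝ) : Set R3 := {x | x 2 ∈ Set.Ioo 0 hh}

/-- The boundary ∂Ω = ℝ² × {0, h}. -/
def bdry (hh : ℝ) : Set R3 := {x | x 2 = 0 ∨ x 2 = hh}

/-- `i`-th standard basis vector of ℝ³. -/
def unitv (i : Fin 3) : R3 := fun j => if j = i then 1 else 0

/-- spatial partial derivative ∂ᵢ -/
def pd (i : Fin 3) (f : R3 → ℝ) : R3 → ℝ := fun x => fderiv ℝ f x (unitv i)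

/-- iterated spatial partial derivatives -/
def pdL : List (Fin 3) → (R3 → ℝ) → R3 → ℝ
  | [], f => f
  | i :: l, f => pd i (pdL l f)

/-- Laplacian -/
def lap (f : R3 → ℝ) : R3 → ℝ := fun x => ∑ i : Fin 3, pd i (pd i f) x

/-- horizontal Laplacian Δ_h -/
def laph (f : R3 → ℝ) : R3 → ℝ := fun x => pd 0 (pd 0 f) x + pd 1 (pd 1 f) x

/-- time derivative -/
def dt (f : ℝ → R3 → ℝ) : ℝ → R3 → ℝ := fun t x => deriv (fun s => f s x) t

/-- `j`-th component of a time dependent vector field -/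
def uc (u : ℝ → R3 → Fin 3 → ℝ) (j : Fin 3) : ℝ → R3 → ℝ := fun t x => u t x j

/-- squared L²(Ω) norm -/
def L2sq (hh : ℝ) (f : R3 → ℝ) : ℝ := ∫ x in slab hh, (f x) ^ 2

/-- squared Hᵏ(Ω) norm -/
def HSq (hh : ℝ) (k : ℕ) (f : R3 → ℝ) : ℝ :=
  ∑ n ∈ Finset.range (k + 1), ∑ α : Fin n → Fin 3, L2sq hh (pdL (List.ofFn α) f)

/-- Hᵏ(Ω) norm -/
def Hnorm (hh : ℝ) (k : ℕ) (f : R3 → ℝ) : ℝ := Real.sqrt (HSq hh k f)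

/-- squared Hᵏ(Ω) norm of a vector field -/
def VHSq (hh : ℝ) (k : ℕ) (w : R3 → Fin 3 → ℝ) : ℝ := ∑ j : Fin 3, HSq hh k (fun x => w x j)

def VHnorm (hh : ℝ) (k : ℕ) (w : R3 → Fin 3 → ℝ) : ℝ := Real.sqrt (VHSq hh k w)

/-- squared ‖∇w‖ₖ² -/
def GradSq (hh : ℝ) (k : ℕ) (w : R3 → Fin 3 → ℝ) : ℝ :=
  ∑ i : Fin 3, ∑ j : Fin 3, HSq hh k (pd i (fun x => w x j))

def GradNorm (hh : ℝ) (k : ℕ) (w : R3 → Fin 3 → ℝ) : ℝ := Real.sqrt (GradSq hh k w)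

/-- iterate of a single partial derivative -/
def pdIter (i : Fin 3) : ℕ → (R3 → ℝ) → R3 → ℝ
  | 0, f => f
  | n + 1, f => pd i (pdIter i n f)

/-- anisotropic norm ‖f‖_{i,l} = ∑_{α₁+α₂=i} ‖∂₁^{α₁}∂₂^{α₂} f‖_{H^l} -/
def anisoNorm (hh : ℝ) (i l : ℕ) (f : R3 → ℝ) : ℝ :=
  ∑ a ∈ Finset.range (i + 1), Hnorm hh l (pdIter 0 a (pdIter 1 (i - a) f))

/-- equilibrium density ρ̄(x) = x₃ + 1 -/
def rbar : R3 → ℝ := fun x => x 2 + 1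

/-- perturbed density ρ = ρ̄ + κ⁻¹ σ -/
def rho (κ : ℝ) (σ : R3 → ℝ) : R3 → ℝ := fun x => rbar x + κ⁻¹ * σ x

/-- The scaled perturbed incompressible NSK system at time `t` on the slab:
    σ_t + u·∇σ + κu₃ = 0,  ρ(u_t + u·∇u) + ∇β = μΔu − Δσ(κe³ + ∇σ),  div u = 0. -/
def NSK (hh μ κ : ℝ) (σ : ℝ → R3 → ℝ) (u : ℝ → R3 → Fin 3 → ℝ) (β : ℝ → R3 → ℝ)
    (t : ℝ) : Prop :=
  ∀ x ∈ slab hh,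
    (dt σ t x + (∑ i : Fin 3, u t x i * pd i (σ t) x) + κ * u t x 2 = 0) ∧
    (∀ j : Fin 3,
      rho κ (σ t) x *
          (dt (uc u j) t x + ∑ i : Fin 3, u t x i * pd i (fun y => u t y j) x)
        + pd j (β t) x
      = μ * lap (fun y => u t y j) x
        - lap (σ t) x * ((if j = 2 then κ else 0) + pd j (σ t) x)) ∧
    (∑ i : Fin 3, pd i (fun y => u t y i) x = 0)

/-- Navier(-slip) boundary conditions at time `t`. -/
def NavierBC (hh : ℝ) (u : ℝ → R3 → Fin 3 → ℝ) (t : ℝ) : Prop :=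
  ∀ x ∈ bdry hh,
    u t x 2 = 0 ∧ pd 2 (fun y => u t y 0) x = 0 ∧ pd 2 (fun y => u t y 1) x = 0

/-- "sufficiently regular" time dependent scalar field: jointly smooth with all
    spatial derivatives (and their time derivatives) square integrable on the slab. -/
def SReg (hh : ℝ) (f : ℝ → R3 → ℝ) : Prop :=
  ContDiff ℝ (⊤ : ℕ∞) (Function.uncurry f) ∧
  ∀ (t : ℝ) (l : List (Fin 3)),
    IntegrableOn (fun x => (pdL l (f t) x) ^ 2) (slab hh) volume ∧
    IntegrableOn (fun x => (pdL l (dt f t) x) ^ 2) (slab hh) volume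

/-- "sufficiently regular" time dependent vector field -/
def VReg (hh : ℝ) (u : ℝ → R3 → Fin 3 → ℝ) : Prop := ∀ j : Fin 3, SReg hh (uc u j)

/-- regular (time independent) data with square integrable derivatives -/
def DReg (hh : ℝ) (f : R3 → ℝ) : Prop :=
  ContDiff ℝ (⊤ : ℕ∞) f ∧ ∀ l : List (Fin 3), IntegrableOn (fun x => (pdL l f x) ^ 2) (slab hh) volume

/-- boundary conditions defining H³_ρ̄ (note ρ̄' = 1) -/
def BCh3 (hh κ : ℝ) (f : R3 → ℝ) : Prop :=
  ∀ x ∈ bdry hh, f x = 0 ∧ pd 2 (pd 2 f) x = 0 ∧ pd 2 f x = -κ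

/-- divergence-free and boundary conditions defining ℋ²ₛ -/
def BCh2s (hh : ℝ) (w : R3 → Fin 3 → ℝ) : Prop :=
  (∀ x ∈ slab hh, ∑ i : Fin 3, pd i (fun y => w y i) x = 0) ∧
  (∀ x ∈ bdry hh, w x 2 = 0 ∧ pd 2 (fun y => w y 0) x = 0 ∧ pd 2 (fun y => w y 1) x = 0)

/-- continuity in time with values in Hᵏ(Ω) -/
def ContH (hh : ℝ) (k : ℕ) (S : Set ℝ) (f : ℝ → R3 → ℝ) : Prop :=
  ∀ t₀ ∈ S,
    Tendsto (fun t => Hnorm hh k (fun x => f t x - f t₀ x)) (nhdsWithin t₀ S) (𝓝 0)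

/-- membership in L²(0,T;Hᵏ) -/
def L2H (hh : ℝ) (k : ℕ) (T : ℝ) (f : ℝ → R3 → ℝ) : Prop :=
  IntegrableOn (fun t => HSq hh k (f t)) (Set.Ioo 0 T) volume

/-- membership in 𝔓_T -/
def memP (hh κ T : ℝ) (σ : ℝ → R3 → ℝ) : Prop :=
  (∀ t ∈ Set.Icc (0:ℝ) T,
    (∀ l : List (Fin 3), l.length ≤ 3 →
      IntegrableOn (fun x => (pdL l (σ t) x) ^ 2) (slab hh) volume) ∧
    BCh3 hh κ (σ t)) ∧
  ContH hh 3 (Set.Icc 0 T) σ ∧ ContH hh 1 (Set.Icc 0 T) (dt σ) ∧ L2H hh 2 T (dt σ)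

/-- membership in 𝒱_T -/
def memV (hh T : ℝ) (u : ℝ → R3 → Fin 3 → ℝ) : Prop :=
  (∀ t ∈ Set.Icc (0:ℝ) T,
    (∀ (j : Fin 3) (l : List (Fin 3)), l.length ≤ 3 →
      IntegrableOn (fun x => (pdL l (fun y => u t y j) x) ^ 2) (slab hh) volume) ∧
    BCh2s hh (u t)) ∧
  (∀ j : Fin 3, ContH hh 2 (Set.Icc 0 T) (uc u j)) ∧
  (∀ j : Fin 3, L2H hh 3 T (uc u j)) ∧
  (∀ j : Fin 3, ContH hh 0 (Set.Icc 0 T) (dt (uc u j))) ∧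
  (∀ j : Fin 3, L2H hh 1 T (dt (uc u j)))

/-- the energy functional E(t) -/
def Efun (hh κ : ℝ) (σ : ℝ → R3 → ℝ) (u : ℝ → R3 → Fin 3 → ℝ) (t : ℝ) : ℝ :=
  HSq hh 3 (σ t) + VHSq hh 2 (u t) + κ ^ 2 * HSq hh 1 (fun x => u t x 2)
    + κ ^ 2 * (L2sq hh (laph (σ t)) + L2sq hh (pd 0 (pd 2 (σ t)))
        + L2sq hh (pd 1 (pd 2 (σ t))))

/-- E⁰, the energy functional evaluated on initial data -/
def E0fun (hh κ : ℝ) (σ0 : R3 → ℝ) (u0 : R3 → Fin 3 → ℝ) : ℝ :=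
  HSq hh 3 σ0 + VHSq hh 2 u0 + κ ^ 2 * HSq hh 1 (fun x => u0 x 2)
    + κ ^ 2 * (L2sq hh (laph σ0) + L2sq hh (pd 0 (pd 2 σ0)) + L2sq hh (pd 1 (pd 2 σ0)))

/-- the functional ℰ(t) -/
def EE (hh κ : ℝ) (σ : ℝ → R3 → ℝ) (u : ℝ → R3 → Fin 3 → ℝ) (t : ℝ) : ℝ :=
  HSq hh 1 (dt σ t) + (∑ j : Fin 3, L2sq hh (dt (uc u j) t)) + Efun hh κ σ u t

/-- the dissipation functional 𝒟(t) -/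
def DD (hh : ℝ) (σ : ℝ → R3 → ℝ) (u : ℝ → R3 → Fin 3 → ℝ) (t : ℝ) : ℝ :=
  (anisoNorm hh 1 2 (σ t)) ^ 2 + HSq hh 2 (dt σ t) + GradSq hh 2 (u t)
    + ∑ j : Fin 3, HSq hh 1 (dt (uc u j) t)

/-- ‖u_t‖ₖ -/
def utNorm (hh : ℝ) (k : ℕ) (u : ℝ → R3 → Fin 3 → ℝ) (t : ℝ) : ℝ :=
  Real.sqrt (∑ j : Fin 3, HSq hh k (dt (uc u j) t))

/-- embedding of the horizontal indices into Fin 3 -/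
def hi (a : Fin 2) : Fin 3 := ⟨a.1, by omega⟩

/-- good initial data: (σ⁰,u⁰) ∈ H³_ρ̄ × ℋ²ₛ, no vacuum, and smallness of E⁰ -/
def GoodData (hh κ d c₁ c₂ : ℝ) (σ0 : R3 → ℝ) (u0 : R3 → Fin 3 → ℝ) : Prop :=
  DReg hh σ0 ∧ (∀ j : Fin 3, DReg hh (fun x => u0 x j)) ∧
  BCh3 hh κ σ0 ∧ BCh2s hh u0 ∧
  (∀ x ∈ slab hh, d ≤ rbar x + κ⁻¹ * σ0 x) ∧
  E0fun hh κ σ0 u0 ≤ ((3 * c₁ * (max κ⁻¹ c₂) ^ 9)⁻¹) ^ 3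

/-- (σ,u,∇β) is a global strong solution with data (σ⁰,u⁰):
    initial condition, equations and boundary conditions for positive times, and
    (σ,u,∇β) ∈ 𝔓_T × 𝒱_T × C⁰([0,T],L²) for every T > 0. -/
def GlobalSol (hh μ κ : ℝ) (σ0 : R3 → ℝ) (u0 : R3 → Fin 3 → ℝ)
    (σ : ℝ → R3 → ℝ) (u : ℝ → R3 → Fin 3 → ℝ) (β : ℝ → R3 → ℝ) : Prop :=
  (∀ x ∈ slab hh, σ 0 x = σ0 x ∧ ∀ j : Fin 3, u 0 x j = u0 x j) ∧
  (∀ t : ℝ, 0 < t → NSK hh μ κ σ u β t ∧ NavierBC hh u t) ∧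
  (∀ T : ℝ, 0 < T → memP hh κ T σ ∧ memV hh T u ∧
    ∀ j : Fin 3, ContH hh 0 (Set.Icc 0 T) (fun t => pd j (β t)))

end

namespace Slab

lemma contDiff_pd {f : R3 → ℝ} (hf : ContDiff ℝ (⊤ : ℕ∞) f) (i : Fin 3) :
    ContDiff ℝ (⊤ : ℕ∞) (pd i f) := by
  unfold pd
  exact (hf.fderiv_right (m := (⊤ : ℕ∞)) (by simp)).clm_apply contDiff_const

lemma diff_of {f : R3 → ℝ} (hf : ContDiff ℝ (⊤ : ℕ∞) f) : Differentiable ℝ f :=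
  hf.differentiable (by simp)

lemma pd_add {f g : R3 → ℝ} (hf : ContDiff ℝ (⊤ : ℕ∞) f) (hg : ContDiff ℝ (⊤ : ℕ∞) g)
    (i : Fin 3) : pd i (fun x => f x + g x) = fun x => pd i f x + pd i g x := by
  funext x
  unfold pd
  rw [fderiv_fun_add (diff_of hf x) (diff_of hg x)]
  rfl

lemma pd_mul {f g : R3 → ℝ} (hf : ContDiff ℝ (⊤ : ℕ∞) f) (hg : ContDiff ℝ (⊤ : ℕ∞) g)
    (i : Fin 3) : pd i (fun x => f x * g x) = fun x => pd i f x * g x + f x * pd i g x := by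
  funext x
  unfold pd
  rw [fderiv_fun_mul (diff_of hf x) (diff_of hg x)]
  simp
  ring

lemma dir_comm {E : Type*} [NormedAddCommGroup E] [NormedSpace ℝ E] {f : E → ℝ}
    (hf : ContDiff ℝ (⊤ : ℕ∞) f) (v w x : E) :
    fderiv ℝ (fun y => fderiv ℝ f y v) x w = fderiv ℝ (fun y => fderiv ℝ f y w) x v := by
  have hd : DifferentiableAt ℝ (fderiv ℝ f) x :=
    ((hf.fderiv_right (m := (⊤ : ℕ∞)) (by simp)).differentiable (by simp)) x
  have hs : IsSymmSndFDerivAt ℝ f x :=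
    hf.contDiffAt.isSymmSndFDerivAt (by simpa using (WithTop.coe_le_coe.2 (le_top : (2 : ℕ∞) ≤ ⊤)))
  rw [fderiv_clm_apply hd (differentiableAt_const v), fderiv_clm_apply hd (differentiableAt_const w)]
  simp
  exact hs w v

lemma pd_comm {f : R3 → ℝ} (hf : ContDiff ℝ (⊤ : ℕ∞) f) (i j : Fin 3) :
    pd i (pd j f) = pd j (pd i f) := by
  funext x
  exact dir_comm hf _ _ x

lemma pdL_add (l : List (Fin 3)) {f g : R3 → ℝ} (hf : ContDiff ℝ (⊤ : ℕ∞) f)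
    (hg : ContDiff ℝ (⊤ : ℕ∞) g) :
    (pdL l (fun x => f x + g x) = fun x => pdL l f x + pdL l g x) ∧
      ContDiff ℝ (⊤ : ℕ∞) (pdL l f) ∧ ContDiff ℝ (⊤ : ℕ∞) (pdL l g) := by
  induction l with
  | nil => exact ⟨rfl, hf, hg⟩
  | cons i l ih =>
    obtain ⟨h1, h2, h3⟩ := ih
    refine ⟨?_, contDiff_pd h2 i, contDiff_pd h3 i⟩
    simp only [pdL, h1]
    exact pd_add h2 h3 i

lemma pdL_append (l : List (Fin 3)) (i : Fin 3) (f : R3 → ℝ) :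
    pdL l (pd i f) = pdL (l ++ [i]) f := by
  induction l with
  | nil => rfl
  | cons j l ih => simp [pdL, ih]

lemma dreg_pd {hh : ℝ} {f : R3 → ℝ} (hf : DReg hh f) (i : Fin 3) : DReg hh (pd i f) := by
  refine ⟨contDiff_pd hf.1 i, fun l => ?_⟩
  rw [pdL_append]
  exact hf.2 _

lemma memLp_of {hh : ℝ} {f : R3 → ℝ} (hc : ContDiff ℝ (⊤ : ℕ∞) f)
    (hf : IntegrableOn (fun x => (f x) ^ 2) (slab hh) volume) :
    MemLp f 2 (volume.restrict (slab hh)) :=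
  (memLp_two_iff_integrable_sq hc.continuous.aestronglyMeasurable).2 hf

lemma dreg_memLp {hh : ℝ} {f : R3 → ℝ} (hf : DReg hh f) :
    MemLp f 2 (volume.restrict (slab hh)) := memLp_of hf.1 (hf.2 [])

lemma dreg_add {hh : ℝ} {f g : R3 → ℝ} (hf : DReg hh f) (hg : DReg hh g) :
    DReg hh (fun x => f x + g x) := by
  refine ⟨hf.1.add hg.1, fun l => ?_⟩
  obtain ⟨h1, h2, h3⟩ := pdL_add l hf.1 hg.1
  rw [h1]
  exact ((memLp_of h2 (hf.2 l)).add (memLp_of h3 (hg.2 l))).integrable_sq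

lemma lap_eq (f : R3 → ℝ) :
    lap f = fun x => (pd 0 (pd 0 f) x + pd 1 (pd 1 f) x) + pd 2 (pd 2 f) x := by
  funext x
  simp [lap, Fin.sum_univ_three]

lemma dreg_lap {hh : ℝ} {f : R3 → ℝ} (hf : DReg hh f) : DReg hh (lap f) := by
  rw [lap_eq]
  exact dreg_add (dreg_add (dreg_pd (dreg_pd hf 0) 0) (dreg_pd (dreg_pd hf 1) 1))
    (dreg_pd (dreg_pd hf 2) 2)

lemma pd_lap {f : R3 → ℝ} (hf : ContDiff ℝ (⊤ : ℕ∞) f) (i : Fin 3) :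
    pd i (lap f) = lap (pd i f) := by
  have h := fun a => contDiff_pd (contDiff_pd hf a) a
  rw [lap_eq, lap_eq, pd_add ((h 0).add (h 1)) (h 2), pd_add (h 0) (h 1)]
  have e : ∀ a, pd i (pd a (pd a f)) = pd a (pd a (pd i f)) := fun a => by
    rw [pd_comm (contDiff_pd hf a) i a, pd_comm hf i a]
  rw [e, e, e]

lemma dreg_int {hh : ℝ} {f g : R3 → ℝ} (hf : DReg hh f) (hg : DReg hh g) :
    IntegrableOn (fun x => f x * g x) (slab hh) volume :=
  (dreg_memLp hf).integrable_mul (dreg_memLp hg)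

lemma measurable_slab (hh : ℝ) : MeasurableSet (slab hh) :=
  measurableSet_preimage (measurable_pi_apply 2) measurableSet_Ioo

lemma hasDerivAt_line {F : R3 → ℝ} (hF : ContDiff ℝ (⊤ : ℕ∞) F) (i : Fin 3) (y : Fin 2 → ℝ)
    (t : ℝ) :
    HasDerivAt (fun s => F (i.insertNth (α := fun _ => ℝ) s y))
      (pd i F (i.insertNth (α := fun _ => ℝ) t y)) t := by
  have h1 : HasDerivAt (fun s : ℝ => (i.insertNth (α := fun _ => ℝ) s y : R3)) (unitv i) t := by
    rw [hasDerivAt_pi]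
    intro j
    by_cases h : j = i
    · subst h
      simp only [Fin.insertNth_apply_same, unitv, if_true]
      exact hasDerivAt_id t
    · obtain ⟨k, rfl⟩ := Fin.exists_succAbove_eq h
      simpa [unitv] using hasDerivAt_const t (y k)
  exact ((diff_of hF _).hasFDerivAt).comp_hasDerivAt t h1

lemma bdry_pd {hh : ℝ} {f : R3 → ℝ} (hf : ContDiff ℝ (⊤ : ℕ∞) f) (h0 : ∀ x ∈ bdry hh, f x = 0)
    {i : Fin 3} (hi : i ≠ 2) : ∀ x ∈ bdry hh, pd i f x = 0 := by
  intro x hx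
  have h := hasDerivAt_line hf i (i.removeNth x) (x i)
  have e : i.insertNth (α := fun _ => ℝ) (x i) (i.removeNth x) = x := Fin.insertNth_self_removeNth i x
  rw [e] at h
  have : (fun s => f (i.insertNth (α := fun _ => ℝ) s (i.removeNth x))) = fun _ => 0 := by
    funext s
    apply h0
    obtain ⟨k, hk⟩ := Fin.exists_succAbove_eq hi.symm
    simp only [bdry, mem_ofPred_eq] at hx ⊢
    rw [← hk] at hx ⊢
    simpa [Fin.removeNth] using hx
  rw [this] at h
  exact h.unique (hasDerivAt_const _ _)

lemma int_pd_zero {hh : ℝ} (hhh : 0 < hh) {F : R3 → ℝ} (hF : ContDiff ℝ (⊤ : ℕ∞) F) (i : Fin 3)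
    (hI : IntegrableOn (pd i F) (slab hh) volume)
    (hb : (i ≠ 2 ∧ IntegrableOn F (slab hh) volume) ∨ (i = 2 ∧ ∀ x ∈ bdry hh, F x = 0)) :
    ∫ x in slab hh, pd i F x = 0 := by
  have mp := (volume_preserving_piFinSuccAbove (fun _ : Fin 3 => ℝ) i).symm
  set e := (MeasurableEquiv.piFinSuccAbove (fun _ : Fin 3 => ℝ) i) with he
  have hes : ∀ p : ℝ × (Fin 2 → ℝ), e.symm p = i.insertNth (α := fun _ => ℝ) p.1 p.2 := fun p => rfl
  have key : ∀ G : R3 → ℝ, IntegrableOn G (slab hh) volume →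
      Integrable (fun p : ℝ × (Fin 2 → ℝ) => (slab hh).indicator G
        (i.insertNth (α := fun _ => ℝ) p.1 p.2)) (volume.prod volume) := by
    intro G hG
    have := (integrable_indicator_iff (measurable_slab hh)).2 hG
    exact (mp.integrable_comp_emb e.symm.measurableEmbedding).2 this
  rw [← integral_indicator (measurable_slab hh), ← mp.integral_comp e.symm.measurableEmbedding]
  simp only [hes]
  have hk := key _ hI
  have : (volume : Measure (ℝ × (Fin 2 → ℝ))) = volume.prod volume := rfl
  rw [this, integral_prod_symm _ hk]
  rcases hb with ⟨hi, hFI⟩ | ⟨hi, hbd⟩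
  · have h1 := hk.swap.prod_right_ae
    have h2 := (key _ hFI).swap.prod_right_ae
    apply integral_eq_zero_of_ae
    filter_upwards [h1, h2] with y h1 h2
    simp only [Function.comp, Prod.swap] at h1 h2
    obtain ⟨k, hk⟩ := Fin.exists_succAbove_eq hi.symm
    by_cases hy : y k ∈ Ioo 0 hh
    · have hm : ∀ t : ℝ, i.insertNth (α := fun _ => ℝ) t y ∈ slab hh := by
        intro t
        simp only [slab, mem_ofPred_eq]
        rw [← hk]
        simpa using hy
      simp only [indicator_of_mem (hm _)] at h1 h2 ⊢
      exact integral_eq_zero_of_hasDerivAt_of_integrable (fun t => hasDerivAt_line hF i y t) h1 h2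
    · have hm : ∀ t : ℝ, i.insertNth (α := fun _ => ℝ) t y ∉ slab hh := by
        intro t
        simp only [slab, mem_ofPred_eq]
        rw [← hk]
        simpa using hy
      simp only [indicator_of_notMem (hm _)]
      simp
  · subst hi
    apply integral_eq_zero_of_ae
    refine Eventually.of_forall fun y => ?_
    have hm : ∀ t : ℝ, (slab hh).indicator (pd 2 F) ((2 : Fin 3).insertNth (α := fun _ => ℝ) t y)
        = (Ioo 0 hh).indicator
          (fun t => pd 2 F ((2 : Fin 3).insertNth (α := fun _ => ℝ) t y)) t := by
      intro t
      have : (2 : Fin 3).insertNth (α := fun _ => ℝ) t y 2 = t := Fin.insertNth_apply_same _ _ _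
      simp only [indicator, slab, mem_ofPred_eq, this]
    simp only [hm]
    rw [integral_indicator measurableSet_Ioo, ← integral_Ioc_eq_integral_Ioo,
      ← intervalIntegral.integral_of_le hhh.le]
    have hc : Continuous fun t : ℝ => pd 2 F ((2 : Fin 3).insertNth (α := fun _ => ℝ) t y) := by
      apply (contDiff_pd hF 2).continuous.comp
      exact Continuous.finInsertNth _ continuous_id continuous_const
    rw [intervalIntegral.integral_eq_sub_of_hasDerivAt
      (fun t _ => hasDerivAt_line hF 2 y t) (hc.intervalIntegrable _ _)]
    rw [hbd _ (Or.inr (Fin.insertNth_apply_same _ _ _)),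
      hbd _ (Or.inl (Fin.insertNth_apply_same _ _ _))]
    simp

lemma ibp {hh : ℝ} (hhh : 0 < hh) {f g : R3 → ℝ} (hf : DReg hh f) (hg : DReg hh g) (i : Fin 3)
    (hb : i ≠ 2 ∨ ∀ x ∈ bdry hh, f x * g x = 0) :
    ∫ x in slab hh, f x * pd i g x = - ∫ x in slab hh, pd i f x * g x := by
  have h1 := dreg_int (dreg_pd hf i) hg
  have h2 := dreg_int hf (dreg_pd hg i)
  have h := int_pd_zero hhh (F := fun x => f x * g x) (hf.1.mul hg.1) i
    (by rw [pd_mul hf.1 hg.1]; exact h1.add h2) (by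
      by_cases hi : i = 2
      · exact Or.inr ⟨hi, hb.resolve_left (by simp [hi])⟩
      · exact Or.inl ⟨hi, dreg_int hf hg⟩)
  rw [pd_mul hf.1 hg.1, integral_add h1 h2] at h
  linarith


/-- Dirichlet or Neumann boundary condition. -/
def DN (hh : ℝ) (w : R3 → ℝ) : Prop :=
  (∀ x ∈ bdry hh, w x = 0) ∨ (∀ x ∈ bdry hh, pd 2 w x = 0)

lemma L2sq_nonneg (hh : ℝ) (f : R3 → ℝ) : 0 ≤ L2sq hh f :=
  integral_nonneg fun _ => sq_nonneg _

lemma HSq_nonneg (hh : ℝ) (k : ℕ) (f : R3 → ℝ) : 0 ≤ HSq hh k f :=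
  Finset.sum_nonneg fun _ _ => Finset.sum_nonneg fun _ _ => L2sq_nonneg _ _

lemma L2sq_eq (hh : ℝ) (f : R3 → ℝ) : L2sq hh f = ∫ x in slab hh, f x * f x := by
  simp only [L2sq, sq]

lemma dreg_sq {hh : ℝ} {f : R3 → ℝ} (hf : DReg hh f) :
    IntegrableOn (fun x => (f x) ^ 2) (slab hh) volume := hf.2 []

lemma iadd {hh : ℝ} {f g : R3 → ℝ} (hf : IntegrableOn f (slab hh) volume)
    (hg : IntegrableOn g (slab hh) volume) :
    IntegrableOn (fun x => f x + g x) (slab hh) volume := hf.add hg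

lemma cross {hh : ℝ} (hhh : 0 < hh) {w : R3 → ℝ} (hw : DReg hh w) (hb : DN hh w) (i j : Fin 3)
    (hi : i ≠ 2) :
    ∫ x in slab hh, pd i (pd i w) x * pd j (pd j w) x = L2sq hh (pd i (pd j w)) := by
  have h1 := ibp hhh (dreg_pd hw i) (dreg_pd (dreg_pd hw j) j) i (Or.inl hi)
  have h2 := ibp hhh (dreg_pd hw i) (dreg_pd (dreg_pd hw j) i) j (by
    by_cases hj : j = 2
    · right
      subst hj
      intro x hx
      rcases hb with hb | hb
      · rw [bdry_pd hw.1 hb hi x hx, zero_mul]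
      · rw [bdry_pd (dreg_pd hw 2).1 hb hi x hx, mul_zero]
    · exact Or.inl hj)
  rw [pd_comm (dreg_pd hw j).1 i j] at h1
  rw [pd_comm hw.1 j i] at h2
  rw [L2sq_eq]
  linarith

lemma hess {hh : ℝ} (hhh : 0 < hh) {w : R3 → ℝ} (hw : DReg hh w) (hb : DN hh w) :
    ∑ i : Fin 3, ∑ j : Fin 3, L2sq hh (pd j (pd i w)) = L2sq hh (lap w) := by
  have h01 := cross hhh hw hb 0 1 (by decide)
  have h02 := cross hhh hw hb 0 2 (by decide)
  have h12 := cross hhh hw hb 1 2 (by decide)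
  have d := fun i => dreg_pd (dreg_pd hw i) i
  have e : L2sq hh (lap w) = ∫ x in slab hh, ((pd 0 (pd 0 w) x) ^ 2 + (pd 1 (pd 1 w) x) ^ 2
      + (pd 2 (pd 2 w) x) ^ 2) + 2 * ((pd 0 (pd 0 w) x * pd 1 (pd 1 w) x) +
      (pd 0 (pd 0 w) x * pd 2 (pd 2 w) x) + (pd 1 (pd 1 w) x * pd 2 (pd 2 w) x)) := by
    unfold L2sq
    congr 1
    funext x
    rw [lap_eq]
    ring
  have s := fun i => dreg_sq (d i)
  have m := fun i j => dreg_int (d i) (d j)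
  rw [integral_add (iadd (iadd (s 0) (s 1)) (s 2)) ((iadd (iadd (m 0 1) (m 0 2)) (m 1 2)).const_mul 2),
    integral_add (iadd (s 0) (s 1)) (s 2), integral_add (s 0) (s 1), integral_const_mul,
    integral_add (iadd (m 0 1) (m 0 2)) (m 1 2), integral_add (m 0 1) (m 0 2), h01, h02, h12] at e
  simp only [Fin.sum_univ_three]
  rw [pd_comm hw.1 1 0, pd_comm hw.1 2 0, pd_comm hw.1 2 1, e]
  simp only [L2sq]
  ring

lemma grad {hh : ℝ} (hhh : 0 < hh) {w : R3 → ℝ} (hw : DReg hh w) (hb : DN hh w) :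
    ∑ i : Fin 3, L2sq hh (pd i w) = - ∫ x in slab hh, w x * lap w x := by
  have h : ∀ i : Fin 3, L2sq hh (pd i w) = - ∫ x in slab hh, w x * pd i (pd i w) x := by
    intro i
    have := ibp hhh hw (dreg_pd hw i) i (by
      by_cases hi : i = 2
      · right
        subst hi
        intro x hx
        rcases hb with hb | hb
        · rw [hb x hx, zero_mul]
        · rw [hb x hx, mul_zero]
      · exact Or.inl hi)
    rw [L2sq_eq]
    linarith
  have m := fun i => dreg_int hw (dreg_pd (dreg_pd hw i) i)
  have e : (fun x => w x * lap w x) = fun x => (w x * pd 0 (pd 0 w) x + w x * pd 1 (pd 1 w) x)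
      + w x * pd 2 (pd 2 w) x := by
    funext x
    rw [lap_eq]
    ring
  rw [e, integral_add (iadd (m 0) (m 1)) (m 2), integral_add (m 0) (m 1)]
  simp only [Fin.sum_univ_three, h]
  ring

lemma young {hh : ℝ} {f g : R3 → ℝ} (hf : DReg hh f) (hg : DReg hh g) (c d : ℝ)
    (hc : 0 ≤ c) (_hd : 0 ≤ d) (hcd : 1 ≤ 4 * c * d) :
    - ∫ x in slab hh, f x * g x ≤ c * L2sq hh f + d * L2sq hh g := by
  unfold L2sq
  rw [← integral_neg, ← integral_const_mul, ← integral_const_mul,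
    ← integral_add ((dreg_sq hf).const_mul c) ((dreg_sq hg).const_mul d)]
  apply integral_mono (dreg_int hf hg).neg
    (((dreg_sq hf).const_mul c).add ((dreg_sq hg).const_mul d))
  intro x
  simp only [Pi.add_apply, Pi.neg_apply]
  have hc' : 0 < c := by
    rcases hc.eq_or_lt with h | h
    · rw [← h] at hcd; norm_num at hcd
    · exact h
  have h1 : 0 ≤ (2 * c * f x + g x) ^ 2 := sq_nonneg _
  have h2 : 0 ≤ (4 * c * d - 1) * (g x) ^ 2 := mul_nonneg (by linarith) (sq_nonneg _)
  have h3 : 0 ≤ (4 * c) * (c * f x ^ 2 + d * g x ^ 2 + f x * g x) := by nlinarith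
  have := nonneg_of_mul_nonneg_right h3 (by positivity : 0 < 4 * c)
  linarith

lemma HSq_zero (hh : ℝ) (f : R3 → ℝ) : HSq hh 0 f = L2sq hh f := by
  simp [HSq, pdL]

lemma HSq_succ (hh : ℝ) (k : ℕ) (f : R3 → ℝ) :
    HSq hh (k + 1) f = L2sq hh f + ∑ i : Fin 3, HSq hh k (pd i f) := by
  unfold HSq
  rw [Finset.sum_range_succ', Finset.sum_comm, add_comm]
  congr 1
  · simp [pdL]
  · apply Finset.sum_congr rfl
    intro n _
    rw [← (Fin.snocEquiv (fun _ : Fin (n + 1) => Fin 3)).sum_comp, Fintype.sum_prod_type]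
    apply Finset.sum_congr rfl
    intro i _
    apply Finset.sum_congr rfl
    intro β _
    rw [pdL_append, List.ofFn_succ']
    simp [Fin.snocEquiv, List.concat_eq_append]

lemma HSq_two (hh : ℝ) (f : R3 → ℝ) :
    HSq hh 2 f = L2sq hh f + ∑ i : Fin 3, L2sq hh (pd i f)
      + ∑ i : Fin 3, ∑ j : Fin 3, L2sq hh (pd j (pd i f)) := by
  rw [HSq_succ]
  simp only [HSq_succ, HSq_zero, Finset.sum_add_distrib]
  ring

lemma basic {hh : ℝ} (hhh : 0 < hh) {w : R3 → ℝ} (hw : DReg hh w) (hb : DN hh w) :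
    HSq hh 2 w ≤ 2 * (L2sq hh w + L2sq hh (lap w)) := by
  rw [HSq_two, hess hhh hw hb, grad hhh hw hb]
  have := young hw (dreg_lap hw) 1 1 (by norm_num) (by norm_num) (by norm_num)
  linarith

lemma wt_int {hh : ℝ} {q : ℝ → ℝ} (hq : Continuous q) {G : R3 → ℝ}
    (hG : IntegrableOn G (slab hh) volume) :
    IntegrableOn (fun x => q (x 2) * G x) (slab hh) volume := by
  obtain ⟨M, hM⟩ := isCompact_Icc.exists_bound_of_continuousOn (s := Icc 0 hh) hq.continuousOn
  refine Integrable.bdd_mul (c := M) hG (hq.comp (continuous_apply 2)).aestronglyMeasurable ?_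
  refine (ae_restrict_iff' (measurable_slab hh)).2 (Eventually.of_forall fun x hx => ?_)
  exact hM _ (Ioo_subset_Icc_self hx)

lemma wt {hh : ℝ} (hhh : 0 < hh) {q q' : ℝ → ℝ} (hq : ContDiff ℝ (⊤ : ℕ∞) q)
    (hd : ∀ t, HasDerivAt q (q' t) t) (hq' : Continuous q') {f g : R3 → ℝ}
    (hf : DReg hh f) (hg : DReg hh g) (hb : ∀ x ∈ bdry hh, q (x 2) * (f x * g x) = 0) :
    IntegrableOn (fun x => q' (x 2) * (f x * g x) + q (x 2) * (pd 2 f x * g x + f x * pd 2 g x))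
      (slab hh) volume ∧
    ∫ x in slab hh, (q' (x 2) * (f x * g x) + q (x 2) * (pd 2 f x * g x + f x * pd 2 g x)) = 0 := by
  have hQ : ContDiff ℝ (⊤ : ℕ∞) (fun x : R3 => q (x 2)) := hq.comp (contDiff_apply ℝ ℝ 2)
  have hQ' : pd 2 (fun x : R3 => q (x 2)) = fun x => q' (x 2) := by
    funext x
    have h1 : HasFDerivAt (fun x : R3 => x 2) (ContinuousLinearMap.proj (R := ℝ) (φ := fun _ : Fin 3 => ℝ) 2) x :=
      hasFDerivAt_apply 2 x
    have h2 := (hd (x 2)).comp_hasFDerivAt x h1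
    unfold pd
    have h3 : fderiv ℝ (fun x : R3 => q (x 2)) x = _ := h2.fderiv
    rw [h3]
    simp [unitv]
  have e := pd_mul hQ (hf.1.mul hg.1) 2
  rw [hQ', pd_mul hf.1 hg.1] at e
  have hI : IntegrableOn (fun x => q' (x 2) * (f x * g x) + q (x 2) * (pd 2 f x * g x + f x * pd 2 g x))
      (slab hh) volume :=
    (wt_int hq' (dreg_int hf hg)).add (wt_int hq.continuous
      ((dreg_int (dreg_pd hf 2) hg).add (dreg_int hf (dreg_pd hg 2))))
  refine ⟨hI, ?_⟩
  have := int_pd_zero hhh (hQ.mul (hf.1.mul hg.1)) 2 (by rw [e]; exact hI) (Or.inr ⟨rfl, hb⟩)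
  rw [e] at this
  exact this

lemma poincare {hh : ℝ} (hhh : 0 < hh) {f : R3 → ℝ} (hf : DReg hh f)
    (hb : ∀ x ∈ bdry hh, f x = 0) : L2sq hh f ≤ 4 * hh ^ 2 * L2sq hh (pd 2 f) := by
  obtain ⟨h1, h2⟩ := wt hhh (q := fun t => t) (q' := fun _ => 1) contDiff_id
    (fun t => hasDerivAt_id t) continuous_const hf hf (fun x hx => by simp [hb x hx])
  have h3 : L2sq hh f ≤ ∫ x in slab hh,
      2 * (1 * (f x * f x) + x 2 * (pd 2 f x * f x + f x * pd 2 f x))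
      + 4 * hh ^ 2 * (pd 2 f x) ^ 2 := by
    refine setIntegral_mono_on (dreg_sq hf)
      ((h1.const_mul 2).add ((dreg_sq (dreg_pd hf 2)).const_mul _)) (measurable_slab hh) ?_
    intro x hx
    have hx0 : 0 < x 2 := hx.1
    have hx1 : x 2 < hh := hx.2
    have : (x 2) ^ 2 ≤ hh ^ 2 := by gcongr
    nlinarith [sq_nonneg (f x + 2 * x 2 * pd 2 f x), mul_nonneg (sub_nonneg.2 this) (sq_nonneg (pd 2 f x))]
  rw [integral_add (h1.const_mul 2) ((dreg_sq (dreg_pd hf 2)).const_mul _), integral_const_mul, h2,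
    integral_const_mul] at h3
  unfold L2sq at h3 ⊢
  linarith

lemma sq_bound (hh : ℝ) {q : ℝ → ℝ} (hq : Continuous q) :
    ∃ M : ℝ, 0 ≤ M ∧ ∀ t ∈ Ioo 0 hh, q t ^ 2 ≤ M := by
  obtain ⟨M, hM⟩ := isCompact_Icc.exists_bound_of_continuousOn (s := Icc 0 hh)
    (hq.pow 2).continuousOn
  refine ⟨|M|, abs_nonneg _, fun t ht => ?_⟩
  exact (le_abs_self _).trans ((hM t (Ioo_subset_Icc_self ht)).trans (le_abs_self _))

lemma interp {hh : ℝ} (hhh : 0 < hh) : ∃ K : ℝ, 0 ≤ K ∧ ∀ f : R3 → ℝ, DReg hh f →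
    L2sq hh (pd 2 f) ≤ K * (L2sq hh f + L2sq hh (pd 2 (pd 2 f))) := by
  have hne : hh ≠ 0 := hhh.ne'
  let p : ℝ → ℝ := fun t => t - 3 / hh * t ^ 2 + 2 / hh ^ 2 * t ^ 3
  let p' : ℝ → ℝ := fun t => 1 - 3 / hh * (2 * t) + 2 / hh ^ 2 * (3 * t ^ 2)
  let r : ℝ → ℝ := fun t => 6 / hh * t - 6 / hh ^ 2 * t ^ 2
  let r' : ℝ → ℝ := fun t => 6 / hh - 6 / hh ^ 2 * (2 * t)
  have hp : ContDiff ℝ (⊤ : ℕ∞) p := by fun_prop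
  have hr : ContDiff ℝ (⊤ : ℕ∞) r := by fun_prop
  have hpc : Continuous p' := by fun_prop
  have hrc : Continuous r' := by fun_prop
  have hpd : ∀ t, HasDerivAt p (p' t) t := fun t => by
    have := ((hasDerivAt_id t).sub ((hasDerivAt_pow 2 t).const_mul (3 / hh))).add
      ((hasDerivAt_pow 3 t).const_mul (2 / hh ^ 2))
    exact this.congr_deriv (by simp [p'])
  have hrd : ∀ t, HasDerivAt r (r' t) t := fun t => by
    have := ((hasDerivAt_id t).const_mul (6 / hh)).sub ((hasDerivAt_pow 2 t).const_mul (6 / hh ^ 2))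
    exact this.congr_deriv (by simp [r'])
  obtain ⟨A, hA0, hA⟩ := sq_bound hh hp.continuous
  obtain ⟨B, hB0, hB⟩ := sq_bound hh hr.continuous
  obtain ⟨D, hD0, hD⟩ := sq_bound hh hrc
  refine ⟨2 * (1 + 4 * A + B + D), by positivity, fun f hf => ?_⟩
  have d1 := dreg_pd hf 2
  have d2 := dreg_pd d1 2
  have hp0 : ∀ x ∈ bdry hh, p (x 2) = 0 := by
    intro x hx
    rcases hx with hx | hx <;> rw [hx] <;> simp only [p] <;> field_simp <;> ring
  have hr0 : ∀ x ∈ bdry hh, r (x 2) = 0 := by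
    intro x hx
    rcases hx with hx | hx <;> rw [hx] <;> simp only [r] <;> field_simp <;> ring
  obtain ⟨i1, e1⟩ := wt hhh hp hpd hpc d1 d1 (fun x hx => by rw [hp0 x hx, zero_mul])
  obtain ⟨i2, e2⟩ := wt hhh hr hrd hrc hf d1 (fun x hx => by rw [hr0 x hx, zero_mul])
  have i12 := (i1.add i2).const_mul 2
  have i3 := ((dreg_sq hf).add (dreg_sq d2)).const_mul (2 * (1 + 4 * A + B + D))
  have h3 := setIntegral_mono_on (dreg_sq d1) (i12.add i3) (measurable_slab hh) (by
    intro x hx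
    have a := hA _ hx
    have b := hB _ hx
    have d := hD _ hx
    have hpr : p' (x 2) = 1 - r (x 2) := by simp only [p', r]; ring
    simp only [Pi.add_apply]
    rw [hpr]
    generalize p (x 2) = P at *
    generalize r (x 2) = R at *
    generalize r' (x 2) = R' at *
    generalize f x = F at *
    generalize pd 2 f x = F1 at *
    generalize pd 2 (pd 2 f) x = F2 at *
    have g1 := sq_nonneg (F1 / 2 + 2 * P * F2)
    have g2 := sq_nonneg (F1 / 2 + R' * F)
    have g3 := sq_nonneg (F + R * F2 / 2)
    have g4 := mul_nonneg (sub_nonneg.2 a) (sq_nonneg F2)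
    have g5 := mul_nonneg (sub_nonneg.2 d) (sq_nonneg F)
    have g6 := mul_nonneg (sub_nonneg.2 b) (sq_nonneg F2)
    have g7 := mul_nonneg hA0 (sq_nonneg F)
    have g8 := mul_nonneg hB0 (sq_nonneg F)
    have g9 := mul_nonneg hD0 (sq_nonneg F2)
    have g10 := mul_nonneg hB0 (sq_nonneg F2)
    have g11 := sq_nonneg F2
    linarith)
  have h4 := integral_add i12 i3
  simp only [Pi.add_apply] at h3 h4
  rw [h4, integral_const_mul, integral_const_mul] at h3
  have h5 := integral_add i1 i2
  have h6 := integral_add (dreg_sq hf) (dreg_sq d2)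
  rw [h5, e1, e2, h6] at h3
  unfold L2sq
  linarith

lemma third {hh : ℝ} {w : R3 → ℝ} (hw : DReg hh w) :
    L2sq hh (pd 2 (pd 2 w)) ≤
      3 * (L2sq hh (lap w) + L2sq hh (pd 0 (pd 0 w)) + L2sq hh (pd 1 (pd 1 w))) := by
  have d := fun i => dreg_pd (dreg_pd hw i) i
  have a := dreg_sq (dreg_lap hw)
  have b := dreg_sq (d 0)
  have c := dreg_sq (d 1)
  unfold L2sq
  rw [← integral_add a b, ← integral_add (iadd a b) c, ← integral_const_mul]
  apply integral_mono (dreg_sq (d 2)) ((iadd (iadd a b) c).const_mul 3)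
  intro x
  simp only [lap_eq]
  generalize pd 0 (pd 0 w) x = A
  generalize pd 1 (pd 1 w) x = B
  generalize pd 2 (pd 2 w) x = D
  nlinarith [sq_nonneg (A - B), sq_nonneg (A + B + D + A), sq_nonneg (A + B + D + B)]

lemma HSq_two_ge (hh : ℝ) (f : R3 → ℝ) :
    L2sq hh f ≤ HSq hh 2 f ∧ (∀ i, L2sq hh (pd i f) ≤ HSq hh 2 f) ∧
      (∀ i j, L2sq hh (pd j (pd i f)) ≤ HSq hh 2 f) := by
  rw [HSq_two]
  have n := L2sq_nonneg hh
  have h1 : 0 ≤ ∑ i : Fin 3, L2sq hh (pd i f) := Finset.sum_nonneg fun _ _ => n _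
  have h2 : 0 ≤ ∑ i : Fin 3, ∑ j : Fin 3, L2sq hh (pd j (pd i f)) :=
    Finset.sum_nonneg fun _ _ => Finset.sum_nonneg fun _ _ => n _
  refine ⟨by linarith, fun i => ?_, fun i j => ?_⟩
  · have := Finset.single_le_sum (f := fun i : Fin 3 => L2sq hh (pd i f)) (fun _ _ => n _)
      (Finset.mem_univ i)
    linarith [n f]
  · have a := Finset.single_le_sum (f := fun j : Fin 3 => L2sq hh (pd j (pd i f))) (fun _ _ => n _)
      (Finset.mem_univ j)
    have b := Finset.single_le_sum (f := fun i : Fin 3 => ∑ j : Fin 3, L2sq hh (pd j (pd i f)))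
      (fun _ _ => Finset.sum_nonneg fun _ _ => n _) (Finset.mem_univ i)
    linarith [n f]

/-- Neumann case of the gradient estimate. -/
lemma gradN {hh : ℝ} (hhh : 0 < hh) {v : R3 → ℝ} (hv : DReg hh v)
    (hb : ∀ x ∈ bdry hh, pd 2 v x = 0) :
    ∑ i : Fin 3, HSq hh 2 (pd i v)
      ≤ 2 * (∑ i : Fin 3, L2sq hh (pd i v) + ∑ i : Fin 3, L2sq hh (lap (pd i v))) := by
  rw [← Finset.sum_add_distrib, Finset.mul_sum]
  apply Finset.sum_le_sum
  intro i _
  apply basic hhh (dreg_pd hv i)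
  by_cases hi : i = 2
  · subst hi
    exact Or.inl hb
  · right
    rw [pd_comm hv.1]
    exact bdry_pd (dreg_pd hv 2).1 hb hi

/-- Dirichlet case of the gradient estimate. -/
lemma gradD {hh : ℝ} (hhh : 0 < hh) : ∃ K : ℝ, 0 ≤ K ∧ ∀ v : R3 → ℝ, DReg hh v →
    (∀ x ∈ bdry hh, v x = 0) →
    ∑ i : Fin 3, HSq hh 2 (pd i v)
      ≤ K * (∑ i : Fin 3, L2sq hh (pd i v) + ∑ i : Fin 3, L2sq hh (lap (pd i v))) := by
  obtain ⟨K, hK0, hK⟩ := interp hhh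
  refine ⟨100 + 100 * K, by positivity, fun v hv hb => ?_⟩
  have b0 := basic hhh (dreg_pd hv 0) (Or.inl (bdry_pd hv.1 hb (by decide)))
  have b1 := basic hhh (dreg_pd hv 1) (Or.inl (bdry_pd hv.1 hb (by decide)))
  have d2 := dreg_pd hv 2
  have t := third d2
  have k := hK _ d2
  obtain ⟨-, p0, q0⟩ := HSq_two_ge hh (pd 0 v)
  obtain ⟨-, p1, q1⟩ := HSq_two_ge hh (pd 1 v)
  have c0 : pd 0 (pd 2 v) = pd 2 (pd 0 v) := pd_comm hv.1 0 2
  have c1 : pd 1 (pd 2 v) = pd 2 (pd 1 v) := pd_comm hv.1 1 2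
  have c02 : pd 0 (pd 2 (pd 2 v)) = pd 2 (pd 2 (pd 0 v)) := by
    rw [pd_comm d2.1 0 2, c0]
  have c12 : pd 1 (pd 2 (pd 2 v)) = pd 2 (pd 2 (pd 1 v)) := by
    rw [pd_comm d2.1 1 2, c1]
  have e := HSq_two hh (pd 2 v)
  simp only [Fin.sum_univ_three] at e ⊢
  rw [c02, c12, c0, c1] at e
  rw [c0, c1] at t
  have n := L2sq_nonneg hh
  set X := L2sq hh (pd 0 v)
  set Y := L2sq hh (pd 1 v)
  set Z := L2sq hh (pd 2 v)
  set X' := L2sq hh (lap (pd 0 v))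
  set Y' := L2sq hh (lap (pd 1 v))
  set Z' := L2sq hh (lap (pd 2 v))
  have nX : 0 ≤ X := n _
  have nY : 0 ≤ Y := n _
  have nZ : 0 ≤ Z := n _
  have nX' : 0 ≤ X' := n _
  have nY' : 0 ≤ Y' := n _
  have nZ' : 0 ≤ Z' := n _
  have t' : L2sq hh (pd 2 (pd 2 (pd 2 v))) ≤ 6 * (X + Y + Z + (X' + Y' + Z')) := by
    linarith [q0 2 0, q1 2 1]
  have k' : L2sq hh (pd 2 (pd 2 v)) ≤ K * (7 * (X + Y + Z + (X' + Y' + Z'))) :=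
    k.trans (mul_le_mul_of_nonneg_left (by linarith) hK0)
  have kn : 0 ≤ K * (X + Y + Z + (X' + Y' + Z')) := by positivity
  linarith [q0 2 0, q0 2 1, q0 2 2, q1 2 0, q1 2 1, q1 2 2, p0 2, p1 2]

/-- Dirichlet estimate without lower order term. -/
lemma dirichlet {hh : ℝ} (hhh : 0 < hh) {w : R3 → ℝ} (hw : DReg hh w)
    (hb : ∀ x ∈ bdry hh, w x = 0) :
    HSq hh 2 w ≤ (1 + 4 * hh ^ 2 + 16 * hh ^ 4) * L2sq hh (lap w) := by
  have p := poincare hhh hw hb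
  have g := grad hhh hw (Or.inl hb)
  have y := young hw (dreg_lap hw) (1 / (8 * hh ^ 2)) (2 * hh ^ 2) (by positivity) (by positivity)
    (by field_simp; norm_num)
  have e := HSq_two hh w
  rw [hess hhh hw (Or.inl hb)] at e
  have n := L2sq_nonneg hh
  have p2 : 1 / (8 * hh ^ 2) * L2sq hh w ≤ L2sq hh (pd 2 w) / 2 := by
    calc 1 / (8 * hh ^ 2) * L2sq hh w ≤ 1 / (8 * hh ^ 2) * (4 * hh ^ 2 * L2sq hh (pd 2 w)) := by
          gcongr
      _ = L2sq hh (pd 2 w) / 2 := by field_simp; ring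
  rw [← g] at y
  simp only [Fin.sum_univ_three] at y e
  have s : L2sq hh (pd 0 w) + L2sq hh (pd 1 w) + L2sq hh (pd 2 w) ≤ 4 * hh ^ 2 * L2sq hh (lap w) := by
    linarith [n (pd 0 w), n (pd 1 w)]
  have q : L2sq hh w ≤ 4 * hh ^ 2 * (4 * hh ^ 2 * L2sq hh (lap w)) :=
    p.trans (mul_le_mul_of_nonneg_left (by linarith [n (pd 0 w), n (pd 1 w)]) (by positivity))
  nlinarith

lemma three {hh : ℝ} (hhh : 0 < hh) : ∃ K : ℝ, 0 ≤ K ∧ ∀ f : R3 → ℝ, DReg hh f →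
    (∀ x ∈ bdry hh, f x = 0 ∧ pd 2 (pd 2 f) x = 0) →
    HSq hh 3 f ≤ K * ∑ i : Fin 3, L2sq hh (pd i (lap f)) := by
  set M := 1 + 4 * hh ^ 2 + 16 * hh ^ 4 with hM
  have hM0 : 0 ≤ M := by positivity
  refine ⟨M + 2 + 3 * (M * (4 * hh ^ 2)), by positivity, fun f hf hb => ?_⟩
  have hb0 : ∀ x ∈ bdry hh, f x = 0 := fun x hx => (hb x hx).1
  have a := dirichlet hhh hf hb0
  have a0 := dirichlet hhh (dreg_pd hf 0) (bdry_pd hf.1 hb0 (by decide))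
  have a1 := dirichlet hhh (dreg_pd hf 1) (bdry_pd hf.1 hb0 (by decide))
  have a2 := basic hhh (dreg_pd hf 2) (Or.inr fun x hx => (hb x hx).2)
  have lb : ∀ x ∈ bdry hh, lap f x = 0 := by
    intro x hx
    rw [lap_eq]
    simp only
    rw [bdry_pd (dreg_pd hf 0).1 (bdry_pd hf.1 hb0 (by decide)) (by decide) x hx,
      bdry_pd (dreg_pd hf 1).1 (bdry_pd hf.1 hb0 (by decide)) (by decide) x hx, (hb x hx).2]
    simp
  have p := poincare hhh (dreg_lap hf) lb
  obtain ⟨r0, r1, -⟩ := HSq_two_ge hh f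
  have r2 := r1 2
  rw [HSq_succ]
  rw [← hM] at a a0 a1
  simp only [Fin.sum_univ_three, pd_lap hf.1] at p ⊢
  have n := L2sq_nonneg hh
  have n0 := n (lap (pd 0 f))
  have n1 := n (lap (pd 1 f))
  have n2 := n (lap (pd 2 f))
  set X := L2sq hh (lap (pd 0 f))
  set Y := L2sq hh (lap (pd 1 f))
  set Z := L2sq hh (lap (pd 2 f))
  have b := a.trans (mul_le_mul_of_nonneg_left p hM0)
  have m0 := mul_nonneg hM0 n2
  have m1 : 0 ≤ M * (4 * hh ^ 2) * X := by positivity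
  have m2 : 0 ≤ M * (4 * hh ^ 2) * Y := by positivity
  linarith

lemma dt_eq {g : ℝ → R3 → ℝ} (hg : ContDiff ℝ (⊤ : ℕ∞) (Function.uncurry g)) (t : ℝ) (x : R3) :
    dt g t x = fderiv ℝ (Function.uncurry g) (t, x) (1, 0) := by
  have h1 : HasDerivAt (fun s : ℝ => (s, x)) ((1 : ℝ), (0 : R3)) t :=
    (hasDerivAt_id t).prodMk (hasDerivAt_const t x)
  have h2 := ((hg.differentiable (by simp) (t, x)).hasFDerivAt).comp_hasDerivAt t h1
  exact h2.deriv

lemma pd_eq {g : ℝ → R3 → ℝ} (hg : ContDiff ℝ (⊤ : ℕ∞) (Function.uncurry g)) (i : Fin 3)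
    (t : ℝ) (x : R3) :
    pd i (g t) x = fderiv ℝ (Function.uncurry g) (t, x) (0, unitv i) := by
  have h1 : HasFDerivAt (fun y : R3 => (t, y)) (ContinuousLinearMap.inr ℝ ℝ R3) x :=
    hasFDerivAt_prodMk_right t x
  have h2 : HasFDerivAt (g t) _ x :=
    ((hg.differentiable (by simp) (t, x)).hasFDerivAt).comp x h1
  unfold pd
  rw [h2.fderiv]
  simp

lemma contDiff_dir {g : ℝ × R3 → ℝ} (hg : ContDiff ℝ (⊤ : ℕ∞) g) (v : ℝ × R3) :
    ContDiff ℝ (⊤ : ℕ∞) (fun p => fderiv ℝ g p v) :=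
  (hg.fderiv_right (m := (⊤ : ℕ∞)) (by simp)).clm_apply contDiff_const

lemma smooth_dt {g : ℝ → R3 → ℝ} (hg : ContDiff ℝ (⊤ : ℕ∞) (Function.uncurry g)) :
    ContDiff ℝ (⊤ : ℕ∞) (Function.uncurry (dt g)) := by
  have : Function.uncurry (dt g) = fun p => fderiv ℝ (Function.uncurry g) p (1, 0) := by
    funext p
    exact dt_eq hg p.1 p.2
  rw [this]
  exact contDiff_dir hg _

lemma smooth_pd {g : ℝ → R3 → ℝ} (hg : ContDiff ℝ (⊤ : ℕ∞) (Function.uncurry g)) (i : Fin 3) :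
    ContDiff ℝ (⊤ : ℕ∞) (Function.uncurry (fun s => pd i (g s))) := by
  have : Function.uncurry (fun s => pd i (g s))
      = fun p => fderiv ℝ (Function.uncurry g) p (0, unitv i) := by
    funext p
    exact pd_eq hg i p.1 p.2
  rw [this]
  exact contDiff_dir hg _

lemma dt_pd {g : ℝ → R3 → ℝ} (hg : ContDiff ℝ (⊤ : ℕ∞) (Function.uncurry g)) (i : Fin 3) :
    dt (fun s => pd i (g s)) = fun t => pd i (dt g t) := by
  funext t x
  rw [dt_eq (smooth_pd hg i), pd_eq (smooth_dt hg)]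
  have e1 : Function.uncurry (fun s => pd i (g s))
      = fun p => fderiv ℝ (Function.uncurry g) p (0, unitv i) := by
    funext p
    exact pd_eq hg i p.1 p.2
  have e2 : Function.uncurry (dt g) = fun p => fderiv ℝ (Function.uncurry g) p (1, 0) := by
    funext p
    exact dt_eq hg p.1 p.2
  rw [e1, e2]
  exact dir_comm hg _ _ _

lemma dt_lap {g : ℝ → R3 → ℝ} (hg : ContDiff ℝ (⊤ : ℕ∞) (Function.uncurry g)) (t : ℝ) :
    dt (fun s => lap (g s)) t = lap (dt g t) := by
  have h : ∀ i, dt (fun s => pd i (pd i (g s))) = fun t => pd i (pd i (dt g t)) := by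
    intro i
    rw [dt_pd (smooth_pd hg i), dt_pd hg]
  funext x
  have hd : ∀ i, DifferentiableAt ℝ (fun s => pd i (pd i (g s)) x) t := by
    intro i
    have h1 := (smooth_pd (smooth_pd hg i) i).differentiable (by simp)
    have h2 : Differentiable ℝ (fun s : ℝ => (s, x)) := by fun_prop
    exact (h1.comp h2) t
  have h' : ∀ i, deriv (fun s => pd i (pd i (g s)) x) t = pd i (pd i (dt g t)) x :=
    fun i => congrFun (congrFun (h i) t) x
  simp only [dt, lap_eq]
  rw [deriv_fun_add ((hd 0).fun_add (hd 1)) (hd 2), deriv_fun_add (hd 0) (hd 1), h', h', h']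

lemma sqrt_le {A B K L : ℝ} (h : A ≤ K * B) (hB : 0 ≤ B) (hL : K ≤ L) (hL0 : 0 ≤ L) :
    Real.sqrt A ≤ Real.sqrt L * Real.sqrt B := by
  rw [← Real.sqrt_mul hL0]
  exact Real.sqrt_le_sqrt (h.trans (mul_le_mul_of_nonneg_right hL hB))

lemma sqrt_le2 {A B D K L : ℝ} (h : A ≤ K * (B + D)) (hB : 0 ≤ B) (hD : 0 ≤ D) (hL : K ≤ L)
    (hL0 : 0 ≤ L) :
    Real.sqrt A ≤ Real.sqrt L * (Real.sqrt B + Real.sqrt D) := by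
  refine (sqrt_le h (add_nonneg hB hD) hL hL0).trans ?_
  exact mul_le_mul_of_nonneg_left (by
    rw [Real.sqrt_le_left (by positivity)]
    nlinarith [Real.sq_sqrt hB, Real.sq_sqrt hD, Real.sqrt_nonneg B, Real.sqrt_nonneg D,
      mul_nonneg (Real.sqrt_nonneg B) (Real.sqrt_nonneg D)]) (Real.sqrt_nonneg _)

end Slab

/-- elliptic regularity estimates on the slab, Lemma 2.2 /
    Lemma A.9 of the appendix. -/
theorem elliptic_estimates_on_slab (hh : ℝ) (hhh : 0 < hh) :
    ∃ C : ℝ, 0 < C ∧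
      -- (1) Navier boundary conditions, i = 0 and i = 1:
      ((∀ u : R3 → Fin 3 → ℝ,
          (∀ j : Fin 3, DReg hh (fun x => u x j)) →
          (∀ x ∈ bdry hh,
            u x 2 = 0 ∧ pd 2 (fun y => u y 0) x = 0 ∧ pd 2 (fun y => u y 1) x = 0) →
          (VHnorm hh 2 u
              ≤ C * (Real.sqrt (∑ j : Fin 3, L2sq hh (fun x => u x j))
                  + Real.sqrt (∑ j : Fin 3, L2sq hh (lap (fun x => u x j)))) ∧
           GradNorm hh 2 u
              ≤ C * (Real.sqrt (∑ i : Fin 3, ∑ j : Fin 3,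
                      L2sq hh (pd i (fun x => u x j)))
                  + Real.sqrt (∑ i : Fin 3, ∑ j : Fin 3,
                      L2sq hh (lap (pd i (fun x => u x j))))))) ∧
      -- (2) Dirichlet-type boundary conditions for σ, s = 1, 2:
      (∀ f : R3 → ℝ, DReg hh f →
          (∀ x ∈ bdry hh, f x = 0 ∧ pd 2 (pd 2 f) x = 0) →
          Hnorm hh 3 f ≤ C * Real.sqrt (∑ i : Fin 3, L2sq hh (pd i (lap f))) ∧
          Hnorm hh 2 (pd 0 f) ≤ C * Real.sqrt (L2sq hh (pd 0 (lap f))) ∧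
          Hnorm hh 2 (pd 1 f) ≤ C * Real.sqrt (L2sq hh (pd 1 (lap f)))) ∧
      -- (2') the case s = t:
      (∀ g : ℝ → R3 → ℝ, SReg hh g →
          (∀ t : ℝ, ∀ x ∈ bdry hh, g t x = 0 ∧ pd 2 (pd 2 (g t)) x = 0) →
          ∀ t : ℝ,
            Hnorm hh 2 (dt g t)
              ≤ C * Real.sqrt (L2sq hh (dt (fun s => lap (g s)) t)))) := by
  obtain ⟨K1, hK1, h1⟩ := Slab.gradD hhh
  obtain ⟨K2, hK2, h2⟩ := Slab.three hhh
  set M := 1 + 4 * hh ^ 2 + 16 * hh ^ 4 with hM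
  have hM0 : 0 ≤ M := by positivity
  set L := 2 + K1 + K2 + M with hL
  have hL0 : 0 < L := by positivity
  have n := Slab.L2sq_nonneg hh
  refine ⟨Real.sqrt L, Real.sqrt_pos.2 hL0, ?_, ?_, ?_⟩
  · intro u hu hb
    have bN : ∀ j : Fin 3, j ≠ 2 → ∀ x ∈ bdry hh, pd 2 (fun y => u y j) x = 0 := by
      intro j hj x hx
      fin_cases j
      · exact (hb x hx).2.1
      · exact (hb x hx).2.2
      · exact absurd rfl hj
    have bD : ∀ x ∈ bdry hh, (fun y => u y 2) x = 0 := fun x hx => (hb x hx).1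
    constructor
    · refine Slab.sqrt_le2 (K := 2) ?_ (Finset.sum_nonneg fun _ _ => n _)
        (Finset.sum_nonneg fun _ _ => n _) (by linarith) hL0.le
      unfold VHSq
      rw [← Finset.sum_add_distrib, Finset.mul_sum]
      apply Finset.sum_le_sum
      intro j _
      apply Slab.basic hhh (hu j)
      by_cases hj : j = 2
      · subst hj
        exact Or.inl bD
      · exact Or.inr (bN j hj)
    · refine Slab.sqrt_le2 (K := 2 + K1) ?_
        (Finset.sum_nonneg fun _ _ => Finset.sum_nonneg fun _ _ => n _)
        (Finset.sum_nonneg fun _ _ => Finset.sum_nonneg fun _ _ => n _) (by linarith) hL0.le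
      unfold GradSq
      rw [Finset.sum_comm, Finset.sum_comm (f := fun i j => L2sq hh (pd i fun x => u x j)),
        Finset.sum_comm (f := fun i j => L2sq hh (lap (pd i fun x => u x j))),
        ← Finset.sum_add_distrib, Finset.mul_sum]
      apply Finset.sum_le_sum
      intro j _
      have nn : 0 ≤ ∑ i : Fin 3, L2sq hh (pd i fun x => u x j)
          + ∑ i : Fin 3, L2sq hh (lap (pd i fun x => u x j)) :=
        add_nonneg (Finset.sum_nonneg fun _ _ => n _) (Finset.sum_nonneg fun _ _ => n _)
      by_cases hj : j = 2
      · subst hj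
        exact (h1 _ (hu 2) bD).trans (mul_le_mul_of_nonneg_right (by linarith) nn)
      · exact (Slab.gradN hhh (hu j) (bN j hj)).trans
          (mul_le_mul_of_nonneg_right (by linarith) nn)
  · intro f hf hb
    have hb0 : ∀ x ∈ bdry hh, f x = 0 := fun x hx => (hb x hx).1
    refine ⟨Slab.sqrt_le (h2 f hf hb) (Finset.sum_nonneg fun _ _ => n _) (by linarith) hL0.le,
      ?_, ?_⟩
    · rw [Slab.pd_lap hf.1]
      exact Slab.sqrt_le (Slab.dirichlet hhh (Slab.dreg_pd hf 0)
        (Slab.bdry_pd hf.1 hb0 (by decide))) (n _) (by linarith) hL0.le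
    · rw [Slab.pd_lap hf.1]
      exact Slab.sqrt_le (Slab.dirichlet hhh (Slab.dreg_pd hf 1)
        (Slab.bdry_pd hf.1 hb0 (by decide))) (n _) (by linarith) hL0.le
  · intro g hg hb t
    rw [Slab.dt_lap hg.1]
    have hd : DReg hh (dt g t) := by
      refine ⟨?_, fun l => (hg.2 t l).2⟩
      exact (Slab.smooth_dt hg.1).comp (contDiff_prodMk_right t)
    refine Slab.sqrt_le (Slab.dirichlet hhh hd ?_) (n _) (by linarith) hL0.le
    intro x hx
    have : (fun s => g s x) = fun _ => 0 := funext fun s => (hb s x hx).1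
    simp [dt, this]
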